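/- Let a₁ < a₂ < b₂ < b₁ be reals with (a₁+b₁)/2 > (a₂+b₂)/2. Let G be the uniform probability distribution on [a₁,b₁] and F the uniform probability distribution on [a₂,b₂] (regarded as a measure on [a₁,b₁]). Then F ⪰_{2,[a₁,b₁]-I} G if and only if b₁ ≤ (3(a₂+b₂) − 2a₁ + √(a₂² + 10·a₂·b₂ + b₂² − 12·a₁·(a₂+b₂−a₁)))/4. -/

import Mathlib

open MeasureTheory Set

noncomputable section

/-- A nonnegative function `v` on `[a,b]` is `α`-convex if `x ↦ (v x)^(1/α)` is convex
on `[a,b]`. -/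
def AlphaConvexOn (α a b : ℝ) (v : ℝ → ℝ) : Prop :=
  (∀ x ∈ Icc a b, 0 ≤ v x) ∧ ConvexOn ℝ (Icc a b) (fun x => v x ^ (1 / α))

/-- `u ∈ I_{α,[a,b]}`: `u` is bounded and measurable on `[a,b]`, weakly increasing on
`[a,b]`, and `x ↦ u b - u x` is `α`-convex on `[a,b]`. -/
def MemI (α a b : ℝ) (u : ℝ → ℝ) : Prop :=
  (∃ M, ∀ x ∈ Icc a b, |u x| ≤ M) ∧
  Measurable u ∧
  MonotoneOn u (Icc a b) ∧
  AlphaConvexOn α a b (fun x => u b - u x)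

/-- `F ⪰_{α,[a,b]-I} G`: the `α,[a,b]`-concave stochastic order. -/
def ConcaveOrder (α a b : ℝ) (F G : Measure ℝ) : Prop :=
  ∀ u : ℝ → ℝ, MemI α a b u → ∫ x, u x ∂G ≤ ∫ x, u x ∂F

/-- `F ⪰_{n,[a,b]-S} G`: the `n,[a,b]`-sufficient stochastic order. -/
def SuffOrder (n : ℕ) (a b : ℝ) (F G : Measure ℝ) : Prop :=
  ∀ c : Fin n → ℝ, (∀ i, c i ∈ Icc a b) →
    ∫ x, ∏ i, max (c i - x) 0 ∂F ≤ ∫ x, ∏ i, max (c i - x) 0 ∂G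

/-- The cumulative distribution function of a Borel measure on `ℝ`. -/
def cdfR (μ : Measure ℝ) (x : ℝ) : ℝ := (μ (Iic x)).toReal

/-!
Let `u` be increasing on `[a, b]` with `g = (u b - u ·) ^ (1 / α)` convex, and suppose that `F`
has more mass than `G` inside `[s, t]` and less outside. The chord of `g` over `[s, t]` is
nonincreasing and lies above `g` inside `[s, t]` and below it outside; since `g b = 0`, its positive
part has the form `k * max (c - x) 0` with `c ∈ [t, b]` and has the same property. Replacing `g` by
it can therefore only decrease the gap `∫ g ^ α ∂G - ∫ g ^ α ∂F`, so the functions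
`-max (c - x) 0 ^ α` are the only ones to be tested.

For nested uniform laws and `α = 2`, this asks for a cubic polynomial in `c` to be nonnegative on
`[b₂, b₁]`. The cubic is concave there and, moreover, nonnegative at `b₂` as soon as it is at `b₁`,
so only the condition at `c = b₁` remains, which is quadratic in `b₁`.
-/

section Crossing

variable {g : ℝ → ℝ} {S : Set ℝ} {a b s t x : ℝ}

lemma sub_mul_le_of_convexOn {y z : ℝ} (hg : ConvexOn ℝ S g) (hx : x ∈ S)
    (hz : z ∈ S) (hxy : x ≤ y) (hyz : y ≤ z) :
    (z - x) * g y ≤ (z - y) * g x + (y - x) * g z := by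
  rcases hxy.eq_or_lt with rfl | hxy
  · simp
  rcases hyz.eq_or_lt with rfl | hyz
  · simp
  exact hg.secant_mono_aux1 hx hz hxy hyz

lemma le_chord_of_convexOn (hg : ConvexOn ℝ S g) (hs : s ∈ S) (ht : t ∈ S)
    (hst : s < t) (hx : x ∈ Icc s t) :
    g x ≤ g t + (g s - g t) / (t - s) * (t - x) := by
  have hst' : 0 < t - s := sub_pos.2 hst
  have := sub_mul_le_of_convexOn hg hs ht hx.1 hx.2
  refine le_of_mul_le_mul_left ?_ hst'
  calc (t - s) * g x ≤ (t - x) * g s + (x - s) * g t := this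
    _ = (t - s) * (g t + (g s - g t) / (t - s) * (t - x)) := by field_simp; ring

lemma chord_le_of_convexOn (hg : ConvexOn ℝ S g) (hs : s ∈ S) (ht : t ∈ S)
    (hst : s < t) (hx : x ∈ S) (hxst : x ∉ Icc s t) :
    g t + (g s - g t) / (t - s) * (t - x) ≤ g x := by
  have hst' : 0 < t - s := sub_pos.2 hst
  refine le_of_mul_le_mul_left ?_ hst'
  have hchord : (t - s) * (g t + (g s - g t) / (t - s) * (t - x)) =
      (t - x) * g s + (x - s) * g t := by field_simp; ring
  rw [hchord]
  rcases lt_or_ge x s with hxs | hsx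
  · linarith [sub_mul_le_of_convexOn hg hx ht hxs.le hst.le]
  · have htx : t < x := not_le.1 fun hxt => hxst ⟨hsx, hxt⟩
    linarith [sub_mul_le_of_convexOn hg hs hx hst.le htx.le]

lemma exists_chord_eq_mul_sub (hg : ConvexOn ℝ (Icc a b) g) (hg₀ : ∀ x ∈ Icc a b, 0 ≤ g x)
    (hgb : g b = 0) (has : a ≤ s) (hst : s < t) (htb : t ≤ b) :
    ∃ c ∈ Icc t b, 0 ≤ (g s - g t) / (t - s) ∧ g t = (g s - g t) / (t - s) * (c - t) := by
  have hs : s ∈ Icc a b := ⟨has, hst.le.trans htb⟩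
  have ht : t ∈ Icc a b := ⟨has.trans hst.le, htb⟩
  have hst' : 0 < t - s := sub_pos.2 hst
  have hstb := sub_mul_le_of_convexOn hg hs (right_mem_Icc.2 (hs.1.trans hs.2)) hst.le htb
  have hslope : 0 ≤ (g s - g t) / (t - s) := by
    refine div_nonneg (sub_nonneg.2 ?_) hst'.le
    refine le_of_mul_le_mul_left ?_ (hst'.trans_le (sub_le_sub_right htb s))
    nlinarith [mul_nonneg hst'.le (hg₀ s hs)]
  have hgt : g t ≤ (g s - g t) / (t - s) * (b - t) := by
    rw [div_mul_eq_mul_div, le_div_iff₀ hst']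
    nlinarith
  rcases hslope.eq_or_lt with hzero | hpos
  · refine ⟨b, ⟨htb, le_rfl⟩, hslope, le_antisymm hgt ?_⟩
    rw [← hzero, zero_mul]
    exact hg₀ t ht
  · refine ⟨t + g t / ((g s - g t) / (t - s)), ⟨?_, ?_⟩, hslope, ?_⟩
    · exact le_add_of_nonneg_right (div_nonneg (hg₀ t ht) hslope)
    · rw [← le_sub_iff_add_le', div_le_iff₀' hpos]
      exact hgt
    · rw [add_sub_cancel_left, mul_div_cancel₀ _ hpos.ne']

lemma exists_mul_max_crossing_of_convexOn (hg : ConvexOn ℝ (Icc a b) g)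
    (hg₀ : ∀ x ∈ Icc a b, 0 ≤ g x) (hgb : g b = 0) (has : a ≤ s) (hst : s < t) (htb : t ≤ b) :
    ∃ k, 0 ≤ k ∧ ∃ c ∈ Icc t b, (∀ x ∈ Icc s t, g x ≤ k * max (c - x) 0) ∧
      ∀ x ∈ Icc a b, x ∉ Icc s t → k * max (c - x) 0 ≤ g x := by
  have hs : s ∈ Icc a b := ⟨has, hst.le.trans htb⟩
  have ht : t ∈ Icc a b := ⟨has.trans hst.le, htb⟩
  obtain ⟨c, hc, hslope, hgt⟩ := exists_chord_eq_mul_sub hg hg₀ hgb has hst htb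
  have hchord (x : ℝ) : g t + (g s - g t) / (t - s) * (t - x) =
      (g s - g t) / (t - s) * (c - x) := by
    linear_combination hgt
  refine ⟨_, hslope, c, hc, fun x hx => ?_, fun x hx hxst => ?_⟩
  · calc g x ≤ (g s - g t) / (t - s) * (c - x) :=
          (le_chord_of_convexOn hg hs ht hst hx).trans_eq (hchord x)
      _ ≤ (g s - g t) / (t - s) * max (c - x) 0 := by gcongr; exact le_max_left _ _
  · rw [mul_max_of_nonneg _ _ hslope, mul_zero]
    exact max_le ((hchord x).symm.trans_le (chord_le_of_convexOn hg hs ht hst hx hxst)) (hg₀ x hx)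

end Crossing

lemma integral_le_integral_of_sign_change {X : Type*} [MeasurableSpace X] {F G : Measure X}
    {A : Set X} {h : X → ℝ} (hA : MeasurableSet A) (hGF : G.restrict A ≤ F.restrict A)
    (hFG : F.restrict Aᶜ ≤ G.restrict Aᶜ) (hhF : Integrable h F) (hhG : Integrable h G)
    (hneg : ∀ᵐ x ∂F, x ∈ A → h x ≤ 0) (hpos : ∀ᵐ x ∂G, x ∉ A → 0 ≤ h x) :
    ∫ x, h x ∂F ≤ ∫ x, h x ∂G := by
  have hin : ∫ x in A, h x ∂F ≤ ∫ x in A, h x ∂G := by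
    have := integral_mono_measure (f := fun x => -h x) hGF
      ((ae_restrict_iff' hA).2 (hneg.mono fun x hx hxA => neg_nonneg.2 (hx hxA)))
      hhF.integrableOn.neg
    simpa only [integral_neg, neg_le_neg_iff] using this
  have hout : ∫ x in Aᶜ, h x ∂F ≤ ∫ x in Aᶜ, h x ∂G :=
    integral_mono_measure hFG ((ae_restrict_iff' hA.compl).2 hpos) hhG.integrableOn
  rw [← integral_add_compl hA hhF, ← integral_add_compl hA hhG]
  exact add_le_add hin hout

section ConcaveOrder

variable {α a b : ℝ}

lemma MemI.integrable {u : ℝ → ℝ} {μ : Measure ℝ} [IsFiniteMeasure μ] (hu : MemI α a b u)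
    (hμ : ∀ᵐ x ∂μ, x ∈ Icc a b) : Integrable u μ := by
  obtain ⟨⟨M, hM⟩, hmeas, -⟩ := hu
  exact .of_bound hmeas.aestronglyMeasurable M (hμ.mono hM)

lemma memI_neg_max_rpow {c : ℝ} (hα : 0 < α) (hcb : c ≤ b) :
    MemI α a b fun x => -max (c - x) 0 ^ α := by
  have hanti : Antitone fun x => max (c - x) 0 ^ α := fun x y hxy =>
    Real.rpow_le_rpow (le_max_right _ _) (max_le_max_right 0 (sub_le_sub_left hxy c)) hα.le
  have hnonneg (x : ℝ) : 0 ≤ max (c - x) 0 ^ α := Real.rpow_nonneg (le_max_right _ _) α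
  have hgap (x : ℝ) : -max (c - b) 0 ^ α - -max (c - x) 0 ^ α = max (c - x) 0 ^ α := by
    rw [max_eq_right (sub_nonpos.2 hcb), Real.zero_rpow hα.ne']
    ring
  refine ⟨⟨max (c - a) 0 ^ α, fun x hx => ?_⟩, by fun_prop, hanti.neg.monotoneOn _,
    fun x _ => (hnonneg x).trans_eq (hgap x).symm, ?_⟩
  · rw [abs_neg, abs_of_nonneg (hnonneg x)]
    exact hanti hx.1
  · have hroot (x : ℝ) : (max (c - x) 0 ^ α) ^ (1 / α) = max (c - x) 0 := by
      rw [one_div, Real.rpow_rpow_inv (le_max_right _ _) hα.ne']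
    simp only [hgap, hroot]
    exact ((convexOn_const c (convex_Icc a b)).sub (concaveOn_id (convex_Icc a b))).sup
      (convexOn_const 0 (convex_Icc a b))

lemma exists_rpow_crossing_of_memI {u : ℝ → ℝ} {s t : ℝ} (hα : 0 < α) (hu : MemI α a b u)
    (has : a ≤ s) (hst : s < t) (htb : t ≤ b) :
    ∃ k, 0 ≤ k ∧ ∃ c ∈ Icc t b, (∀ x ∈ Icc s t, u b - u x ≤ k * max (c - x) 0 ^ α) ∧
      ∀ x ∈ Icc a b, x ∉ Icc s t → k * max (c - x) 0 ^ α ≤ u b - u x := by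
  obtain ⟨-, -, -, hgap, hconv⟩ := hu
  obtain ⟨k, hk, c, hc, hin, hout⟩ := exists_mul_max_crossing_of_convexOn hconv
    (fun x hx => Real.rpow_nonneg (hgap x hx) _)
    (by simp only [sub_self, Real.zero_rpow (one_div_ne_zero hα.ne')]) has hst htb
  have hpow {x : ℝ} (hx : x ∈ Icc a b) : ((u b - u x) ^ (1 / α)) ^ α = u b - u x := by
    rw [one_div, Real.rpow_inv_rpow (hgap x hx) hα.ne']
  refine ⟨k ^ α, Real.rpow_nonneg hk α, c, hc, fun x hx => ?_, fun x hx hxst => ?_⟩ <;>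
    rw [← Real.mul_rpow hk (le_max_right _ _)]
  · have hx' : x ∈ Icc a b := Icc_subset_Icc has htb hx
    rw [← hpow hx']
    exact Real.rpow_le_rpow (Real.rpow_nonneg (hgap x hx') _) (hin x hx) hα.le
  · rw [← hpow hx]
    exact Real.rpow_le_rpow (mul_nonneg hk (le_max_right _ _)) (hout x hx hxst) hα.le

theorem concaveOrder_iff_forall_integral_max_rpow_le {s t : ℝ} {F G : Measure ℝ}
    [IsProbabilityMeasure F] [IsProbabilityMeasure G] (hα : 0 < α)
    (has : a ≤ s) (hst : s < t) (htb : t ≤ b)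
    (hF : ∀ᵐ x ∂F, x ∈ Icc a b) (hG : ∀ᵐ x ∂G, x ∈ Icc a b)
    (hGF : G.restrict (Icc s t) ≤ F.restrict (Icc s t))
    (hFG : F.restrict (Icc s t)ᶜ ≤ G.restrict (Icc s t)ᶜ) :
    ConcaveOrder α a b F G ↔
      ∀ c ∈ Icc t b, ∫ x, max (c - x) 0 ^ α ∂F ≤ ∫ x, max (c - x) 0 ^ α ∂G := by
  refine ⟨fun h c hc => ?_, fun h u hu => ?_⟩
  · simpa only [integral_neg, neg_le_neg_iff] using h _ (memI_neg_max_rpow hα hc.2)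
  obtain ⟨k, hk, c, hc, hin, hout⟩ := exists_rpow_crossing_of_memI hα hu has hst htb
  have hint {μ : Measure ℝ} [IsFiniteMeasure μ] (hμ : ∀ᵐ x ∂μ, x ∈ Icc a b) :
      Integrable (fun x => u b - u x) μ ∧ Integrable (fun x => k * max (c - x) 0 ^ α) μ := by
    refine ⟨(integrable_const _).sub (hu.integrable hμ), Integrable.const_mul ?_ k⟩
    exact integrable_neg_iff.1 ((memI_neg_max_rpow hα hc.2).integrable hμ)
  have hdiff := integral_le_integral_of_sign_change measurableSet_Icc hGF hFG
    ((hint hF).1.sub (hint hF).2) ((hint hG).1.sub (hint hG).2)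
    (.of_forall fun x hx => sub_nonpos.2 (hin x hx))
    (hG.mono fun x hx hxst => sub_nonneg.2 (hout x hx hxst))
  have heval {μ : Measure ℝ} [IsProbabilityMeasure μ] (hμ : ∀ᵐ x ∂μ, x ∈ Icc a b) :
      ∫ x, (u b - u x - k * max (c - x) 0 ^ α) ∂μ =
        u b - ∫ x, u x ∂μ - k * ∫ x, max (c - x) 0 ^ α ∂μ := by
    rw [integral_sub (hint hμ).1 (hint hμ).2, integral_sub (integrable_const _) (hu.integrable hμ),
      integral_const_mul, integral_const, probReal_univ, one_smul]
  simp only [Pi.sub_apply] at hdiff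
  rw [heval hF, heval hG] at hdiff
  linarith [mul_le_mul_of_nonneg_left (h c hc) hk]

end ConcaveOrder

section Uniform

/-- The uniform probability distribution on `[a, b]`, meaningful for `a < b`. -/
def uniformIcc (a b : ℝ) : Measure ℝ :=
  (ENNReal.ofReal (b - a))⁻¹ • volume.restrict (Icc a b)

variable {α a b s t : ℝ}

lemma isProbabilityMeasure_uniformIcc (hab : a < b) : IsProbabilityMeasure (uniformIcc a b) := by
  refine ⟨?_⟩
  rw [uniformIcc, Measure.smul_apply, Measure.restrict_apply_univ, Real.volume_Icc, smul_eq_mul,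
    ENNReal.inv_mul_cancel (ENNReal.ofReal_pos.2 (sub_pos.2 hab)).ne' ENNReal.ofReal_ne_top]

lemma ae_mem_Icc_uniformIcc : ∀ᵐ x ∂uniformIcc a b, x ∈ Icc a b :=
  Measure.ae_smul_measure (ae_restrict_mem measurableSet_Icc) _

lemma integral_uniformIcc (hab : a ≤ b) (f : ℝ → ℝ) :
    ∫ x, f x ∂uniformIcc a b = (b - a)⁻¹ * ∫ x in a..b, f x := by
  rw [uniformIcc, integral_smul_measure, integral_Icc_eq_integral_Ioc,
    intervalIntegral.integral_of_le hab, ENNReal.toReal_inv,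
    ENNReal.toReal_ofReal (sub_nonneg.2 hab), smul_eq_mul]

lemma restrict_uniformIcc_le (has : a ≤ s) (htb : t ≤ b) :
    (uniformIcc a b).restrict (Icc s t) ≤ (uniformIcc s t).restrict (Icc s t) := by
  have hsub : Icc s t ⊆ Icc a b := Icc_subset_Icc has htb
  rw [uniformIcc, uniformIcc, Measure.restrict_smul, Measure.restrict_smul,
    Measure.restrict_restrict_of_subset hsub, Measure.restrict_restrict_of_subset subset_rfl]
  gcongr

lemma restrict_compl_uniformIcc : (uniformIcc s t).restrict (Icc s t)ᶜ = 0 :=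
  Measure.restrict_eq_zero.2 ae_mem_Icc_uniformIcc

lemma hasDerivAt_neg_max_sub_rpow_div {c x : ℝ} (hα : 0 < α) (hx : x ≠ c) :
    HasDerivAt (fun x => -(max (c - x) 0 ^ (α + 1) / (α + 1))) (max (c - x) 0 ^ α) x := by
  have hα' : 0 < α + 1 := by linarith
  rcases hx.lt_or_gt with hxc | hcx
  · have hpow := ((hasDerivAt_id x).const_sub c).rpow_const (p := α + 1)
      (.inl (sub_pos.2 hxc).ne')
    refine (hpow.div_const (α + 1)).neg.congr_of_eventuallyEq ?_ |>.congr_deriv ?_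
    · filter_upwards [eventually_lt_nhds hxc] with y hy
      simp [max_eq_left (sub_pos.2 hy).le]
    · rw [max_eq_left (sub_pos.2 hxc).le, id, add_sub_cancel_right]
      field_simp
  · rw [max_eq_right (sub_nonpos.2 hcx.le), Real.zero_rpow hα.ne']
    refine (hasDerivAt_const x (0 : ℝ)).congr_of_eventuallyEq ?_
    filter_upwards [eventually_gt_nhds hcx] with y hy
    simp [max_eq_right (sub_nonpos.2 hy.le), Real.zero_rpow hα'.ne']

lemma integral_max_sub_rpow (hα : 0 < α) (c : ℝ) :
    ∫ x in s..t, max (c - x) 0 ^ α =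
      (max (c - s) 0 ^ (α + 1) - max (c - t) 0 ^ (α + 1)) / (α + 1) := by
  have hcont (β : ℝ) (hβ : 0 < β) : Continuous fun x => max (c - x) 0 ^ β :=
    (by fun_prop : Continuous fun x => max (c - x) 0).rpow_const fun _ => .inr hβ.le
  rw [integral_eq_of_hasDerivAt_off_countable _ _ (countable_singleton c)
    ((hcont (α + 1) (by linarith)).div_const _).neg.continuousOn
    (fun x hx => hasDerivAt_neg_max_sub_rpow_div hα hx.2)
    ((hcont α hα).intervalIntegrable s t)]
  simp only [Pi.neg_apply]
  ring

theorem concaveOrder_uniformIcc_iff (hα : 0 < α) (has : a ≤ s) (hst : s < t) (htb : t ≤ b) :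
    ConcaveOrder α a b (uniformIcc s t) (uniformIcc a b) ↔
      ∀ c ∈ Icc t b, (b - a) * ((c - s) ^ (α + 1) - (c - t) ^ (α + 1)) ≤
        (t - s) * (c - a) ^ (α + 1) := by
  have hab : a < b := has.trans_lt (hst.trans_le htb)
  have := isProbabilityMeasure_uniformIcc hst
  have := isProbabilityMeasure_uniformIcc hab
  rw [concaveOrder_iff_forall_integral_max_rpow_le hα has hst htb
    (ae_mem_Icc_uniformIcc.mono fun _ hx => Icc_subset_Icc has htb hx) ae_mem_Icc_uniformIcc
    (restrict_uniformIcc_le has htb) (restrict_compl_uniformIcc.trans_le (Measure.zero_le _))]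
  refine forall₂_congr fun c hc => ?_
  have hα' : 0 < α + 1 := by linarith
  rw [integral_uniformIcc hst.le, integral_uniformIcc hab.le, integral_max_sub_rpow hα,
    integral_max_sub_rpow hα, max_eq_left (by linarith [hc.1] : 0 ≤ c - s),
    max_eq_left (sub_nonneg.2 hc.1), max_eq_left (by linarith [hc.1] : 0 ≤ c - a),
    max_eq_right (sub_nonpos.2 hc.2), Real.zero_rpow hα'.ne', sub_zero, inv_mul_eq_div,
    inv_mul_eq_div, div_div, div_div, div_le_div_iff₀
      (mul_pos hα' (sub_pos.2 hst)) (mul_pos hα' (sub_pos.2 hab))]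
  refine .trans ?_ (mul_le_mul_iff_of_pos_left hα')
  ring_nf

end Uniform

section Cubic

variable {a b B : ℝ}

lemma mul_sub_sq_le_cube_of_quadratic_nonpos (ha : 0 ≤ a) (hab : a < b)
    (hB : 2 * B ^ 2 - 3 * (a + b) * B + (a ^ 2 + a * b + b ^ 2) ≤ 0) :
    B * (b - a) ^ 2 ≤ b ^ 3 := by
  have hsum : 0 < a + b := by linarith
  -- The tangent to the quadratic at `a + b` already gives a sufficient bound on `B`.
  have htangent : (a + b) * B ≤ a ^ 2 + 3 * a * b + b ^ 2 := by
    linarith [sq_nonneg (B - (a + b))]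
  refine le_of_mul_le_mul_left ?_ hsum
  calc (a + b) * (B * (b - a) ^ 2) = (a + b) * B * (b - a) ^ 2 := by ring
    _ ≤ (a ^ 2 + 3 * a * b + b ^ 2) * (b - a) ^ 2 := by gcongr
    _ = (a + b) * b ^ 3 - a ^ 2 * (2 * b ^ 2 + b * (b - a) + (b ^ 2 - a ^ 2)) := by ring
    _ ≤ (a + b) * b ^ 3 := by
      have : 0 ≤ b ^ 2 - a ^ 2 := sub_nonneg.2 (by gcongr)
      have : 0 ≤ b * (b - a) := mul_nonneg (ha.trans hab.le) (sub_pos.2 hab).le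
      exact sub_le_self _ (by positivity)

lemma mul_quadratic_le_cube {c : ℝ} (hb : B * (b - a) ^ 2 ≤ b ^ 3) (hB₀ : 0 ≤ B)
    (hB : 2 * B ^ 2 - 3 * (a + b) * B + (a ^ 2 + a * b + b ^ 2) ≤ 0) (hc : c ∈ Icc b B) :
    B * (3 * c ^ 2 - 3 * (a + b) * c + (a ^ 2 + a * b + b ^ 2)) ≤ c ^ 3 := by
  rcases hc.1.eq_or_lt with rfl | hbc
  · linarith
  have hbB : 0 < B - b := sub_pos.2 (hbc.trans_le hc.2)
  have hleft : 0 ≤ (B - c) * (b ^ 3 - B * (b - a) ^ 2) :=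
    mul_nonneg (sub_nonneg.2 hc.2) (sub_nonneg.2 hb)
  have hright : 0 ≤ (c - b) *
      (B * -(2 * B ^ 2 - 3 * (a + b) * B + (a ^ 2 + a * b + b ^ 2))) :=
    mul_nonneg (sub_pos.2 hbc).le (mul_nonneg hB₀ (neg_nonneg.2 hB))
  have hconcave : 0 ≤ (B - b) * ((c - b) * (B - c) * ((B - b) + (B - c))) :=
    mul_nonneg hbB.le (mul_nonneg (mul_nonneg (sub_pos.2 hbc).le (sub_nonneg.2 hc.2))
      (add_nonneg hbB.le (sub_nonneg.2 hc.2)))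
  refine sub_nonneg.1 (nonneg_of_mul_nonneg_right ?_ hbB)
  linarith

lemma forall_mul_cube_sub_le_iff (ha : 0 ≤ a) (hab : a < b) (hbB : b ≤ B) :
    (∀ c ∈ Icc b B, B * ((c - a) ^ 3 - (c - b) ^ 3) ≤ (b - a) * c ^ 3) ↔
      2 * B ^ 2 - 3 * (a + b) * B + (a ^ 2 + a * b + b ^ 2) ≤ 0 := by
  have hB₀ : 0 < B := (ha.trans_lt hab).trans_le hbB
  have hfactor (c : ℝ) : B * ((c - a) ^ 3 - (c - b) ^ 3) ≤ (b - a) * c ^ 3 ↔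
      B * (3 * c ^ 2 - 3 * (a + b) * c + (a ^ 2 + a * b + b ^ 2)) ≤ c ^ 3 := by
    refine .trans ?_ (mul_le_mul_iff_of_pos_left (sub_pos.2 hab))
    constructor <;> intro h <;> linarith
  simp only [hfactor]
  refine ⟨fun h => ?_, fun h c hc => mul_quadratic_le_cube
    (mul_sub_sq_le_cube_of_quadratic_nonpos ha hab h) hB₀.le h hc⟩
  have hatB := h B ⟨hbB, le_rfl⟩
  refine nonpos_of_mul_nonpos_right ?_ hB₀
  linarith

lemma quadratic_nonpos_iff_le_root (ha : 0 ≤ a) (hab : a ≤ b) (hbB : b ≤ B) :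
    2 * B ^ 2 - 3 * (a + b) * B + (a ^ 2 + a * b + b ^ 2) ≤ 0 ↔
      B ≤ (3 * (a + b) + √(a ^ 2 + 10 * a * b + b ^ 2)) / 4 := by
  have hb : 0 ≤ b := ha.trans hab
  have hlower : -√(a ^ 2 + 10 * a * b + b ^ 2) ≤ 4 * B - 3 * (a + b) := by
    have : 3 * a - b ≤ √(a ^ 2 + 10 * a * b + b ^ 2) :=
      Real.le_sqrt_of_sq_le (by nlinarith [mul_le_mul_of_nonneg_left hab ha])
    linarith
  calc 2 * B ^ 2 - 3 * (a + b) * B + (a ^ 2 + a * b + b ^ 2) ≤ 0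
      ↔ (4 * B - 3 * (a + b)) ^ 2 ≤ a ^ 2 + 10 * a * b + b ^ 2 := by
        constructor <;> intro h <;> linarith
    _ ↔ 4 * B - 3 * (a + b) ≤ √(a ^ 2 + 10 * a * b + b ^ 2) := by
        rw [Real.sq_le (by positivity), and_iff_right hlower]
    _ ↔ B ≤ (3 * (a + b) + √(a ^ 2 + 10 * a * b + b ^ 2)) / 4 := by
        constructor <;> intro h <;> linarith

end Cubic

theorem stmt_15_general (a₁ a₂ b₂ b₁ : ℝ) (h1 : a₁ ≤ a₂) (h2 : a₂ < b₂) (h3 : b₂ ≤ b₁) :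
    ConcaveOrder 2 a₁ b₁ (uniformIcc a₂ b₂) (uniformIcc a₁ b₁) ↔
      b₁ ≤ (3 * (a₂ + b₂) - 2 * a₁ +
        √(a₂ ^ 2 + 10 * a₂ * b₂ + b₂ ^ 2 - 12 * a₁ * (a₂ + b₂ - a₁))) / 4 := by
  have ha : 0 ≤ a₂ - a₁ := sub_nonneg.2 h1
  have hab : a₂ - a₁ < b₂ - a₁ := sub_lt_sub_right h2 a₁
  have hbB : b₂ - a₁ ≤ b₁ - a₁ := sub_le_sub_right h3 a₁
  calc ConcaveOrder 2 a₁ b₁ (uniformIcc a₂ b₂) (uniformIcc a₁ b₁)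
      ↔ ∀ c ∈ Icc b₂ b₁, (b₁ - a₁) * ((c - a₂) ^ 3 - (c - b₂) ^ 3) ≤
          (b₂ - a₂) * (c - a₁) ^ 3 := by
        rw [concaveOrder_uniformIcc_iff two_pos h1 h2 h3, two_add_one_eq_three]
        simp only [Real.rpow_ofNat]
    _ ↔ ∀ c ∈ Icc (b₂ - a₁) (b₁ - a₁), (b₁ - a₁) * ((c - (a₂ - a₁)) ^ 3 -
          (c - (b₂ - a₁)) ^ 3) ≤ (b₂ - a₁ - (a₂ - a₁)) * c ^ 3 := by
        refine .trans ?_ (Equiv.subRight a₁).forall_congr_right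
        simp only [Equiv.subRight_apply, mem_Icc, sub_le_sub_iff_right, sub_sub_sub_cancel_right]
    _ ↔ b₁ - a₁ ≤ (3 * (a₂ - a₁ + (b₂ - a₁)) + √((a₂ - a₁) ^ 2 +
          10 * (a₂ - a₁) * (b₂ - a₁) + (b₂ - a₁) ^ 2)) / 4 := by
        rw [forall_mul_cube_sub_le_iff ha hab hbB, quadratic_nonpos_iff_le_root ha hab.le hbB]
    _ ↔ _ := by
        rw [show (a₂ - a₁) ^ 2 + 10 * (a₂ - a₁) * (b₂ - a₁) + (b₂ - a₁) ^ 2 =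
          a₂ ^ 2 + 10 * a₂ * b₂ + b₂ ^ 2 - 12 * a₁ * (a₂ + b₂ - a₁) by ring]
        constructor <;> intro h <;> linarith

theorem stmt_15 (a₁ a₂ b₂ b₁ : ℝ) (h1 : a₁ < a₂) (h2 : a₂ < b₂) (h3 : b₂ < b₁)
    (hmid : (a₂ + b₂) / 2 < (a₁ + b₁) / 2) :
    ConcaveOrder 2 a₁ b₁
        ((ENNReal.ofReal (b₂ - a₂))⁻¹ • volume.restrict (Icc a₂ b₂))
        ((ENNReal.ofReal (b₁ - a₁))⁻¹ • volume.restrict (Icc a₁ b₁)) ↔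
      b₁ ≤ (3 * (a₂ + b₂) - 2 * a₁ +
        Real.sqrt (a₂ ^ 2 + 10 * a₂ * b₂ + b₂ ^ 2 - 12 * a₁ * (a₂ + b₂ - a₁))) / 4 :=
  stmt_15_general a₁ a₂ b₂ b₁ h1.le h2 h3.le
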